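/- Let H be a hypergraph on vertex set V with intersection sets I ∈ I_H (each I ⊆ V, |I| ≥ 2), and let I_E be the collection of even-order subsets (including ∅) contained in some I ∈ I_H. A function T : 2^V → ℝ satisfies, for every I ∈ I_H and every bipartition {a,b} of I, Σ_{σ : σ∩(a∪b)=a} T(σ) + Σ_{σ : σ∩(a∪b)=b} T(σ) = 0, if and only if T̂(α) = T̂(∅) for every nonempty α ∈ I_E, where T̂(α) = 2^{-n} Σ_τ T(τ)(-1)^{|α ∩ τ|}. -/

import Mathlib

open Finset

/-- Fourier coefficient `T̂(α) = 2^{-n} Σ_τ T(τ) (-1)^{|α ∩ τ|}`. -/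
noncomputable def boolFourierCoeff {V : Type*} [Fintype V] [DecidableEq V]
    (T : Finset V → ℝ) (α : Finset V) : ℝ :=
  (∑ τ : Finset V, T τ * (-1 : ℝ) ^ (α ∩ τ).card) / 2 ^ (Fintype.card V)

/-!
Fix an intersection set `I`. For `α ⊆ I` the coefficient `T̂(α)` only sees the marginal
`f c = ∑_{σ ∩ I = c} T σ`, and the cancellation conditions say that the symmetrization
`g c = f c + f (I \ c)` vanishes except possibly at `c = ∅` and `c = I`. The transform of `g` at `α`
is `(1 + (-1)^|α|)` times that of `f`, so it is zero for odd `α` and carries exactly the even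
coefficients of `T`. Every character of even order equals `1` at both `∅` and `I`, so if `g` is
supported there, the even coefficients agree. Conversely, if they all agree, Fourier inversion
writes `g c` as a multiple of two complete character sums, at `c` and at `I \ c`, and these vanish
when both sets are nonempty.
-/

section Walsh

variable {V R : Type*} [DecidableEq V] [CommRing R]

lemma neg_one_pow_card_inter_eq_prod (α x : Finset V) :
    (-1 : R) ^ #(α ∩ x) = ∏ i ∈ α, if i ∈ x then -1 else 1 := by
  rw [prod_ite_mem, prod_const]

lemma neg_one_pow_card_inter_symmDiff (α x y : Finset V) :
    (-1 : R) ^ #(α ∩ symmDiff x y) = (-1) ^ #(α ∩ x) * (-1) ^ #(α ∩ y) := by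
  simp only [neg_one_pow_card_inter_eq_prod, ← prod_mul_distrib]
  refine prod_congr rfl fun i _ ↦ ?_
  by_cases hx : i ∈ x <;> by_cases hy : i ∈ y <;> simp [mem_symmDiff, hx, hy]

lemma neg_one_pow_card_inter_sdiff {α c I : Finset V} (hα : α ⊆ I) (hc : c ⊆ I) :
    (-1 : R) ^ #(α ∩ (I \ c)) = (-1) ^ #α * (-1) ^ #(α ∩ c) := by
  rw [← symmDiff_of_le hc, neg_one_pow_card_inter_symmDiff, inter_eq_left.2 hα, mul_comm]

lemma sum_powerset_neg_one_pow_card_inter (I x : Finset V) :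
    ∑ α ∈ I.powerset, (-1 : R) ^ #(α ∩ x) = if Disjoint I x then 2 ^ #I else 0 := by
  simp only [neg_one_pow_card_inter_eq_prod, ← prod_one_add]
  split_ifs with h
  · rw [← prod_const]
    refine prod_congr rfl fun i hi ↦ ?_
    rw [if_neg (disjoint_left.1 h hi), one_add_one_eq_two]
  · obtain ⟨i, hi, hix⟩ := not_disjoint_iff.1 h
    exact prod_eq_zero hi (by rw [if_pos hix, add_neg_cancel])

lemma sum_powerset_neg_one_pow_card_inter_eq_zero {I x : Finset V} (hx : x ⊆ I)
    (hne : x.Nonempty) : ∑ α ∈ I.powerset, (-1 : R) ^ #(α ∩ x) = 0 := by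
  rw [sum_powerset_neg_one_pow_card_inter, if_neg]
  rw [disjoint_comm, disjoint_of_le_iff_left_eq_bot hx]
  exact hne.ne_empty

lemma sum_powerset_neg_one_pow_card_inter_mul {I x y : Finset V} (hx : x ⊆ I) (hy : y ⊆ I) :
    ∑ α ∈ I.powerset, (-1 : R) ^ #(α ∩ x) * (-1) ^ #(α ∩ y) = if x = y then 2 ^ #I else 0 := by
  have disjoint_iff : Disjoint I (symmDiff x y) ↔ x = y := by
    have symmDiff_subset : symmDiff x y ⊆ I := symmDiff_le_sup.trans (union_subset hx hy)
    rw [disjoint_comm, disjoint_of_le_iff_left_eq_bot symmDiff_subset, symmDiff_eq_bot]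
  simp only [← neg_one_pow_card_inter_symmDiff, sum_powerset_neg_one_pow_card_inter, disjoint_iff]

/-- The unnormalized Walsh–Hadamard transform at `α` of the restriction of `f` to the subsets
of `I`. It is meant for `α ⊆ I`; a general `α` acts through `α ∩ I`. -/
def walshTransform (I : Finset V) (f : Finset V → R) (α : Finset V) : R :=
  ∑ c ∈ I.powerset, f c * (-1) ^ #(α ∩ c)

lemma sum_powerset_neg_one_pow_mul_walshTransform {I x : Finset V} (hx : x ⊆ I)
    (f : Finset V → R) :
    ∑ α ∈ I.powerset, (-1) ^ #(α ∩ x) * walshTransform I f α = 2 ^ #I * f x := by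
  calc ∑ α ∈ I.powerset, (-1) ^ #(α ∩ x) * walshTransform I f α
      = ∑ c ∈ I.powerset, f c * ∑ α ∈ I.powerset, (-1) ^ #(α ∩ x) * (-1) ^ #(α ∩ c) := by
        simp only [walshTransform, mul_sum]
        rw [sum_comm]
        simp only [mul_left_comm]
    _ = ∑ c ∈ I.powerset, f c * if x = c then 2 ^ #I else 0 :=
        sum_congr rfl fun c hc ↦ by
          rw [sum_powerset_neg_one_pow_card_inter_mul hx (mem_powerset.1 hc)]
    _ = 2 ^ #I * f x := by
        simp [hx, mul_comm]

lemma walshTransform_comp_sdiff {I α : Finset V} (hα : α ⊆ I) (f : Finset V → R) :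
    walshTransform I (fun c ↦ f (I \ c)) α = (-1) ^ #α * walshTransform I f α := by
  rw [walshTransform, walshTransform, mul_sum]
  refine sum_nbij' (I \ ·) (I \ ·) (by simp) (by simp) (by simp) (by simp) fun c hc ↦ ?_
  rw [neg_one_pow_card_inter_sdiff hα (mem_powerset.1 hc), mul_left_comm, ← mul_assoc ((-1) ^ #α),
    ← mul_pow, neg_one_mul, neg_neg, one_pow, one_mul]

lemma walshTransform_add_comp_sdiff {I α : Finset V} (hα : α ⊆ I) (f : Finset V → R) :
    walshTransform I (fun c ↦ f c + f (I \ c)) α = (1 + (-1) ^ #α) * walshTransform I f α := by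
  rw [one_add_mul, ← walshTransform_comp_sdiff hα]
  simp only [walshTransform, add_mul, sum_add_distrib]

lemma walshTransform_eq_of_even_of_support {I α : Finset V} (hα : α ⊆ I) (hev : Even #α)
    {g : Finset V → R} (hg : ∀ c ⊂ I, c ≠ ∅ → g c = 0) :
    walshTransform I g α = walshTransform I g ∅ := by
  refine sum_congr rfl fun c hc ↦ ?_
  by_cases h₀ : c = ∅
  · simp [h₀]
  by_cases h₁ : c = I
  · simp [h₁, inter_eq_left.2 hα, hev.neg_one_pow]
  · simp [hg c ((mem_powerset.1 hc).ssubset_of_ne h₁) h₀]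

variable [NoZeroDivisors R] [NeZero (2 : R)]

lemma walshTransform_eq_of_add_sdiff_eq_zero {I α : Finset V} (hα : α ⊆ I) (hev : Even #α)
    {f : Finset V → R} (hf : ∀ c ⊂ I, c ≠ ∅ → f c + f (I \ c) = 0) :
    walshTransform I f α = walshTransform I f ∅ := by
  have h := walshTransform_eq_of_even_of_support hα hev hf
  rw [walshTransform_add_comp_sdiff hα, walshTransform_add_comp_sdiff (empty_subset I),
    hev.neg_one_pow, card_empty, pow_zero, one_add_one_eq_two] at h
  exact mul_left_cancel₀ two_ne_zero h

lemma add_sdiff_eq_zero_of_walshTransform_eq {I : Finset V} {f : Finset V → R}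
    (hf : ∀ α ⊆ I, Even #α → walshTransform I f α = walshTransform I f ∅)
    {c : Finset V} (hc : c ⊂ I) (hne : c ≠ ∅) : f c + f (I \ c) = 0 := by
  have transform_add (α : Finset V) (hα : α ⊆ I) :
      walshTransform I (fun c ↦ f c + f (I \ c)) α
        = (1 + (-1) ^ #α) * walshTransform I f ∅ := by
    rw [walshTransform_add_comp_sdiff hα]
    rcases Nat.even_or_odd #α with hev | hodd
    · rw [hf α hα hev]
    · simp [hodd.neg_one_pow]
  have inversion : 2 ^ #I * (f c + f (I \ c)) = 0 := by
    calc 2 ^ #I * (f c + f (I \ c))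
        = ∑ α ∈ I.powerset,
            (-1) ^ #(α ∩ c) * ((1 + (-1) ^ #α) * walshTransform I f ∅) := by
          rw [← sum_powerset_neg_one_pow_mul_walshTransform hc.subset fun c ↦ f c + f (I \ c)]
          exact sum_congr rfl fun α hα ↦ by rw [transform_add α (mem_powerset.1 hα)]
      _ = (∑ α ∈ I.powerset, (-1) ^ #(α ∩ c) + ∑ α ∈ I.powerset, (-1) ^ #(α ∩ (I \ c)))
            * walshTransform I f ∅ := by
          rw [← sum_add_distrib, sum_mul]
          refine sum_congr rfl fun α hα ↦ ?_
          rw [neg_one_pow_card_inter_sdiff (mem_powerset.1 hα) hc.subset]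
          ring
      _ = 0 := by
          rw [sum_powerset_neg_one_pow_card_inter_eq_zero hc.subset (nonempty_iff_ne_empty.2 hne),
            sum_powerset_neg_one_pow_card_inter_eq_zero sdiff_subset (sdiff_nonempty.2 hc.2),
            add_zero, zero_mul]
  exact (mul_eq_zero.1 inversion).resolve_left (pow_ne_zero _ two_ne_zero)

lemma forall_add_sdiff_eq_zero_iff_walshTransform_eq (I : Finset V) (f : Finset V → R) :
    (∀ c ⊂ I, c ≠ ∅ → f c + f (I \ c) = 0) ↔
      ∀ α ⊆ I, Even #α → walshTransform I f α = walshTransform I f ∅ :=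
  ⟨fun hf _ hα hev ↦ walshTransform_eq_of_add_sdiff_eq_zero hα hev hf,
    fun hf _ ↦ add_sdiff_eq_zero_of_walshTransform_eq hf⟩

end Walsh

lemma forall_bipartition_iff_forall_sdiff {V : Type*} [DecidableEq V] {I : Finset V}
    {p : Finset V → Finset V → Prop} :
    (∀ a b, a ≠ ∅ → b ≠ ∅ → Disjoint a b → a ∪ b = I → p a b) ↔
      ∀ c ⊂ I, c ≠ ∅ → p c (I \ c) := by
  constructor
  · intro h c hc hne
    exact h c (I \ c) hne (sdiff_nonempty.2 hc.2).ne_empty disjoint_sdiff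
      (union_sdiff_of_subset hc.subset)
  · rintro h a b ha hb hab rfl
    have hssub : a ⊂ a ∪ b := left_lt_sup.2 fun hba ↦ hb (hab.eq_bot_of_ge hba)
    simpa only [union_sdiff_cancel_left hab] using h a hssub ha

section Marginal

variable {V : Type*} [Fintype V] [DecidableEq V]

/-- The marginal of `T` on `I`: the total weight of the sets whose trace on `I` is `c`. -/
def marginal {M : Type*} [AddCommMonoid M] (T : Finset V → M) (I c : Finset V) : M :=
  ∑ σ with σ ∩ I = c, T σ

lemma walshTransform_marginal {R : Type*} [CommRing R] (T : Finset V → R) {I α : Finset V}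
    (hα : α ⊆ I) : walshTransform I (marginal T I) α = ∑ σ, T σ * (-1) ^ #(α ∩ σ) := by
  have trace_mem (σ : Finset V) (_ : σ ∈ univ) : σ ∩ I ∈ I.powerset :=
    mem_powerset.2 inter_subset_right
  rw [← sum_fiberwise_of_maps_to trace_mem]
  refine sum_congr rfl fun c _ ↦ ?_
  rw [marginal, sum_mul]
  refine sum_congr rfl fun σ hσ ↦ ?_
  rw [← (mem_filter.1 hσ).2, inter_comm σ, ← inter_assoc, inter_eq_left.2 hα]

lemma boolFourierCoeff_eq_walshTransform_marginal (T : Finset V → ℝ) {I α : Finset V}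
    (hα : α ⊆ I) :
    boolFourierCoeff T α = walshTransform I (marginal T I) α / 2 ^ Fintype.card V := by
  rw [boolFourierCoeff, walshTransform_marginal T hα]

lemma forall_bipartition_marginal_iff_boolFourierCoeff_eq (T : Finset V → ℝ) (I : Finset V) :
    (∀ a b, a ≠ ∅ → b ≠ ∅ → Disjoint a b → a ∪ b = I → marginal T I a + marginal T I b = 0) ↔
      ∀ α ⊆ I, Even #α → boolFourierCoeff T α = boolFourierCoeff T ∅ := by
  rw [forall_bipartition_iff_forall_sdiff, forall_add_sdiff_eq_zero_iff_walshTransform_eq]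
  refine forall₃_congr fun α hα _ ↦ ?_
  rw [boolFourierCoeff_eq_walshTransform_marginal T hα,
    boolFourierCoeff_eq_walshTransform_marginal T (empty_subset I), div_left_inj' (by positivity)]

end Marginal

/-- For a hypergraph with intersection sets `I ∈ I_H` (each of size ≥ 2), `T` satisfies the
bipartition cancellation conditions iff `T̂(α) = T̂(∅)` for every nonempty even-order
subset `α` of some intersection. -/
theorem stmt_16 {V : Type*} [Fintype V] [DecidableEq V]
    (IH : Finset (Finset V)) (hIH : ∀ I ∈ IH, 2 ≤ I.card) (T : Finset V → ℝ) :
    (∀ I ∈ IH, ∀ a b : Finset V, a ≠ ∅ → b ≠ ∅ → Disjoint a b → a ∪ b = I →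
      (∑ σ ∈ Finset.univ.filter (fun σ : Finset V => σ ∩ (a ∪ b) = a), T σ)
        + (∑ σ ∈ Finset.univ.filter (fun σ : Finset V => σ ∩ (a ∪ b) = b), T σ) = 0)
    ↔ (∀ α : Finset V, α ≠ ∅ → Even α.card → (∃ I ∈ IH, α ⊆ I) →
        boolFourierCoeff T α = boolFourierCoeff T ∅) := by
  constructor
  · rintro h α - hev ⟨I, hI, hαI⟩
    refine (forall_bipartition_marginal_iff_boolFourierCoeff_eq T I).1 ?_ α hαI hev
    rintro a b ha hb hab rfl
    exact h _ hI a b ha hb hab rfl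
  · rintro h I hI a b ha hb hab rfl
    refine (forall_bipartition_marginal_iff_boolFourierCoeff_eq T (a ∪ b)).2 ?_ a b ha hb hab rfl
    intro α hα hev
    rcases eq_or_ne α ∅ with rfl | hne
    · rfl
    · exact h α hne hev ⟨_, hI, hα⟩
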